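/- Let Λ′ ∈ P^+_{l′}, Λ″ ∈ P^+_{l″}, p ∈ 𝒫(Λ″) and λ = λ(p). The path p + Λ′ := (p_k + Λ′)_{k≥0} belongs to 𝒫(Λ′,Λ″) if and only if, for every r ∈ ℤ/nℤ, the number of normal r-nodes of λ that are removable is at most Λ′(r), the coefficient of Λ_r in Λ′. Consequently 𝒴(Λ′,Λ″) = {λ ∈ 𝒴(Λ″) : for every r ∈ ℤ/nℤ, the number of normal removable r-nodes of λ is at most Λ′(r)}. -/

import Mathlib

/-!
Write `e_k` for the `k`-th step of `p = π(λ)`, so that restrictedness of `p + Λ′` says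
`e_k(r) - p_k(r) ≤ Λ′(r)` for all `k` and `r`. The recursion for `p` telescopes, component by
component, to
`e_k(r) - p_k(r) = #{removable r-nodes at rows of length > k} - #{addable ones}` (`path_eq`).

On the other side, the number of normal removable nodes is the maximum, over all suffixes of the
signature, of the number of removable minus the number of addable letters; this maximum is
invariant under cancellation (`good_of_reduces`, `good_normal`).

The two maxima agree because the signature of a cylindrical multipartition is sorted by row length,
with removable nodes before addable ones among equal row lengths (`node_sorted`). Unrolling the
cylinder moves all nodes of colour `r` to a single diagonal, on which the components become nested
regions read from the smallest to the largest; hence the crossing point moves weakly outwards, and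
as long as it stays fixed a removable corner can become an addable one but not conversely.
Consequently the maximum over suffixes is attained at one of the suffixes given by row length `> k`
(`good_iff_filter`).
-/

open scoped BigOperators

namespace BF

/-- The fundamental weight `Λ_i`, viewed as the indicator function `ZMod n → ℤ` of `i`. -/
def Lam (n : ℕ) (i : ZMod n) : ZMod n → ℤ := fun j => if j = i then 1 else 0

/-- A weight is dominant if all its coefficients are nonnegative. -/
def Dominant (n : ℕ) (a : ZMod n → ℤ) : Prop := ∀ i, 0 ≤ a i

/-- The step weight of `e : ZMod n → ℕ`: its `Λ_j`-coefficient is `e (j-1) - e j`. -/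
def stepWt (n : ℕ) (e : ZMod n → ℕ) : ZMod n → ℤ := fun j => (e (j - 1) : ℤ) - (e j : ℤ)

/-- Membership in `A_l^+`: `d` is the step weight of some `e : ZMod n → ℕ` of total sum `l`. -/
def InA (n : ℕ) [NeZero n] (l : ℕ) (d : ZMod n → ℤ) : Prop :=
  ∃ e : ZMod n → ℕ, (∑ i, e i) = l ∧ d = stepWt n e

/-- The ground-state path of the weight `Λ`: `p̄_k (i) = Λ (i - k)`,
which is the coefficient form of `p̄_k = Λ_{v₀+k} + ⋯ + Λ_{v_{l-1}+k}`. -/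
def gsp (n : ℕ) (Λ : ZMod n → ℤ) (k : ℕ) : ZMod n → ℤ := fun i => Λ (i - (k : ZMod n))

/-- `p` is a `Λ`-path of level `l`. -/
def IsPath (n : ℕ) [NeZero n] (l : ℕ) (Λ : ZMod n → ℤ) (p : ℕ → ZMod n → ℤ) : Prop :=
  (∀ k, InA n l (fun i => p (k + 1) i - p k i)) ∧ ∃ K, ∀ k ≥ K, p k = gsp n Λ k

/-- The length of a `Λ`-path: least `K` with `p k = p̄ k` for all `k ≥ K`. -/
noncomputable def pathLen (n : ℕ) (Λ : ZMod n → ℤ) (p : ℕ → ZMod n → ℤ) : ℕ :=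
  sInf {K | ∀ k ≥ K, p k = gsp n Λ k}

/-- `f : ℕ → ℕ` is a partition (rows are indexed from `0`). -/
def IsPartitionF (f : ℕ → ℕ) : Prop := (∀ i, f (i + 1) ≤ f i) ∧ ∃ N, ∀ i ≥ N, f i = 0

/-- An `l`-multipartition. -/
def IsMP (l : ℕ) (lam : Fin l → ℕ → ℕ) : Prop := ∀ j, IsPartitionF (lam j)

/-- The data `v : Fin l → ℕ` of a decomposition `Λ = Λ_{v 0} + ⋯ + Λ_{v (l-1)}`
with `0 ≤ v 0 ≤ ⋯ ≤ v (l-1) < n`. -/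
def SortedV (n l : ℕ) (v : Fin l → ℕ) : Prop := Monotone v ∧ ∀ j, v j < n

/-- The weight `Λ = Λ_{v 0} + ⋯ + Λ_{v (l-1)}` determined by `v`. -/
def wtOf (n : ℕ) {l : ℕ} (v : Fin l → ℕ) : ZMod n → ℤ :=
  fun i => ((Finset.univ.filter fun j : Fin l => ((v j : ZMod n) = i)).card : ℤ)

/-- The colour of the node in (0-based) row `i`, (1-based) column `c` of component `j`:
`(c - (i+1) + v j) mod n`. -/
def colour (n : ℕ) {l : ℕ} (v : Fin l → ℕ) (j : Fin l) (i c : ℕ) : ZMod n :=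
  (c : ZMod n) - (i : ZMod n) - 1 + (v j : ZMod n)

/-- `N^r(λ)`: the total number of nodes of colour `r` in the multipartition `λ`. -/
noncomputable def Ncolour (n : ℕ) {l : ℕ} (v : Fin l → ℕ) (lam : Fin l → ℕ → ℕ)
    (r : ZMod n) : ℕ :=
  Nat.card {x : Fin l × ℕ × ℕ //
    1 ≤ x.2.2 ∧ x.2.2 ≤ lam x.1 x.2.1 ∧ colour n v x.1 x.2.1 x.2.2 = r}

/-- The height `f′_m` of the `m`-th column of the partition `f`. -/
noncomputable def colHt (f : ℕ → ℕ) (m : ℕ) : ℕ := Nat.card {i : ℕ // m ≤ f i}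

/-- The function `e` whose step weight is the `k`-th step of `π(λ)`:
`e i = #{j : v j + k - λ^{(j)′}_{k+1} ≡ i mod n}`. -/
noncomputable def eFun (n : ℕ) {l : ℕ} (v : Fin l → ℕ) (lam : Fin l → ℕ → ℕ) (k : ℕ) :
    ZMod n → ℕ :=
  fun i => Nat.card {j : Fin l //
    (v j : ZMod n) + (k : ZMod n) - (colHt (lam j) (k + 1) : ZMod n) = i}

/-- `p = π(λ)` where `λ` is an `l`-multipartition of highest weight `wtOf n v`. -/
def IsPi (n : ℕ) {l : ℕ} (v : Fin l → ℕ) (lam : Fin l → ℕ → ℕ)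
    (p : ℕ → ZMod n → ℤ) : Prop :=
  (∀ k, (fun i => p (k + 1) i - p k i) = stepWt n (eFun n v lam k)) ∧
  ∃ K, ∀ k ≥ K, p k = gsp n (wtOf n v) k

/-- `λ` is cylindrical of highest weight `Λ = wtOf n v`. -/
def Cylindrical (n : ℕ) {l : ℕ} (v : Fin l → ℕ) (lam : Fin l → ℕ → ℕ) : Prop :=
  (∀ (j : ℕ) (hj : j + 1 < l) (i : ℕ),
      lam ⟨j + 1, hj⟩ (i + (v ⟨j + 1, hj⟩ - v ⟨j, Nat.lt_of_succ_lt hj⟩)) ≤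
        lam ⟨j, Nat.lt_of_succ_lt hj⟩ i) ∧
  ∀ (hl : 0 < l) (i : ℕ),
      lam ⟨0, hl⟩ (i + (n + v ⟨0, hl⟩ - v ⟨l - 1, Nat.sub_lt hl Nat.one_pos⟩)) ≤
        lam ⟨l - 1, Nat.sub_lt hl Nat.one_pos⟩ i

/-- `λ` is higher than `μ`: every column of each component of `λ` is at most as high as
the corresponding column of `μ`. -/
def Higher {l : ℕ} (lam mu : Fin l → ℕ → ℕ) : Prop :=
  ∀ (j : Fin l) (k : ℕ), 1 ≤ k → colHt (lam j) k ≤ colHt (mu j) k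

/-- `λ` is the highest-lift of the path `p`: it is a cylindrical multipartition with
`π(λ) = p` which is higher than every cylindrical multipartition mapping to `p`. -/
def IsHL (n : ℕ) {l : ℕ} (v : Fin l → ℕ) (lam : Fin l → ℕ → ℕ)
    (p : ℕ → ZMod n → ℤ) : Prop :=
  IsMP l lam ∧ Cylindrical n v lam ∧ IsPi n v lam p ∧
    ∀ mu : Fin l → ℕ → ℕ, IsMP l mu → Cylindrical n v mu → IsPi n v mu p → Higher lam mu

/-- `λ ∈ 𝒴(Λ)` with `Λ = wtOf n v`. -/
def InY (n : ℕ) {l : ℕ} (v : Fin l → ℕ) (lam : Fin l → ℕ → ℕ) : Prop :=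
  ∃ p, IsHL n v lam p

/-- `α′_r = -Λ_{r-1} + 2Λ_r - Λ_{r+1}`. -/
def alphaP (n : ℕ) (r : ZMod n) : ZMod n → ℤ :=
  fun i => -(Lam n (r - 1) i) + 2 * Lam n r i - Lam n (r + 1) i

/-- `ψ_r(k)`: the number of length-`k` rows of `λ` whose right end has colour `r`. -/
noncomputable def psiCount (n : ℕ) {l : ℕ} (v : Fin l → ℕ) (lam : Fin l → ℕ → ℕ)
    (k : ℕ) (r : ZMod n) : ℕ :=
  Nat.card {x : Fin l × ℕ // lam x.1 x.2 = k ∧ colour n v x.1 x.2 k = r}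

/-- The number of length-`k` rows of `λ` whose left end has colour `r`. -/
noncomputable def leftCount (n : ℕ) {l : ℕ} (v : Fin l → ℕ) (lam : Fin l → ℕ → ℕ)
    (k : ℕ) (r : ZMod n) : ℕ :=
  Nat.card {x : Fin l × ℕ // lam x.1 x.2 = k ∧ colour n v x.1 x.2 1 = r}

/-- The total number of length-`k` rows of `λ`. -/
noncomputable def rowCount {l : ℕ} (lam : Fin l → ℕ → ℕ) (k : ℕ) : ℕ :=
  Nat.card {x : Fin l × ℕ // lam x.1 x.2 = k}

/-- `m_r(k)`: the number of `r`-nodes of `λ` in column `k` or to its right. -/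
noncomputable def mCount (n : ℕ) {l : ℕ} (v : Fin l → ℕ) (lam : Fin l → ℕ → ℕ)
    (k : ℕ) (r : ZMod n) : ℕ :=
  Nat.card {x : Fin l × ℕ × ℕ //
    k ≤ x.2.2 ∧ x.2.2 ≤ lam x.1 x.2.1 ∧ colour n v x.1 x.2.1 x.2.2 = r}

/-- `p` is a `(Λ′,Λ″)`-restricted path, where `l''` is the level of `Λ″`:
`p - Λ′ ∈ 𝒫(Λ″)` and `p_k - η̂_k` is dominant for all `k`. -/
def IsRes (n : ℕ) [NeZero n] (l'' : ℕ) (L' L'' : ZMod n → ℤ) (p : ℕ → ZMod n → ℤ) : Prop :=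
  IsPath n l'' L'' (fun k i => p k i - L' i) ∧
  ∀ k, ∃ e : ZMod n → ℕ, (∑ i, e i) = l'' ∧
    (fun i => p (k + 1) i - p k i) = stepWt n e ∧ ∀ i, (e i : ℤ) ≤ p k i

/-- The length of a restricted path: `ℓ(p) = ℓ(p - Λ′)`. -/
noncomputable def resLen (n : ℕ) (L' L'' : ZMod n → ℤ) (p : ℕ → ZMod n → ℤ) : ℕ :=
  sInf {K | ∀ k ≥ K, (fun i => p k i - L' i) = gsp n L'' k}

/-- `♯Λ`. -/
def sharpWt (n : ℕ) (Λ : ZMod n → ℤ) : ZMod n → ℤ := fun i => Λ (-i)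

/-- `♯p`: `(♯p)_k (i) = a_{k-i}(k)` where `p_k = ∑ a_i(k) Λ_i`. -/
def sharpPath (n : ℕ) (p : ℕ → ZMod n → ℤ) : ℕ → ZMod n → ℤ :=
  fun k i => p k ((k : ZMod n) - i)

/-- `θ(a) = 1` if `a ≥ 0`, `0` otherwise. -/
def theta (a : ℤ) : ℕ := if 0 ≤ a then 1 else 0

/-- The function counting the entries of `μ : Fin l → ℕ` in each class mod `n`. -/
def cntF (n : ℕ) {l : ℕ} (μ : Fin l → ℕ) : ZMod n → ℕ :=
  fun i => (Finset.univ.filter fun j : Fin l => ((μ j : ZMod n) = i)).card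

/-- The energy function `H` on `A_l^+ × A_l^+`:
`H(α,β) = min_{σ ∈ S_l} ∑_j θ(μ_j - ν_{σ(j)})` where `α`, `β` are the step weights of
`Λ_{μ_0} + ⋯ + Λ_{μ_{l-1}}`, `Λ_{ν_0} + ⋯ + Λ_{ν_{l-1}}` with `0 ≤ μ_j, ν_j < n`. -/
noncomputable def Hfun (n : ℕ) (l : ℕ) (d d' : ZMod n → ℤ) : ℕ :=
  sInf {m | ∃ μ ν : Fin l → ℕ, (∀ j, μ j < n) ∧ (∀ j, ν j < n) ∧
    d = stepWt n (cntF n μ) ∧ d' = stepWt n (cntF n ν) ∧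
    m = Finset.univ.inf' ⟨1, Finset.mem_univ 1⟩
      fun σ : Equiv.Perm (Fin l) => ∑ j, theta ((μ j : ℤ) - (ν (σ j) : ℤ))}

/-- `(j, i)` is a removable `r`-node of `λ` (node at the right end of 0-based row `i`
of component `j`). -/
def RemNode (n : ℕ) {l : ℕ} (v : Fin l → ℕ) (lam : Fin l → ℕ → ℕ) (r : ZMod n)
    (j : Fin l) (i : ℕ) : Prop :=
  1 ≤ lam j i ∧ lam j (i + 1) < lam j i ∧ colour n v j i (lam j i) = r

/-- `(j, i)` is an addable `r`-node of `λ` (node addable at the end of 0-based row `i`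
of component `j`). -/
def AddNode (n : ℕ) {l : ℕ} (v : Fin l → ℕ) (lam : Fin l → ℕ → ℕ) (r : ZMod n)
    (j : Fin l) (i : ℕ) : Prop :=
  (i = 0 ∨ lam j i < lam j (i - 1)) ∧ colour n v j i (lam j i + 1) = r

/-- The diagonal number `d = c - (i+1) + v j` of the addable/removable node
`x = (j, i, isRemovable)`. -/
def nodeD {l : ℕ} (v : Fin l → ℕ) (lam : Fin l → ℕ → ℕ) (x : Fin l × ℕ × Bool) : ℤ :=
  (if x.2.2 then (lam x.1 x.2.1 : ℤ) else (lam x.1 x.2.1 : ℤ) + 1) - ((x.2.1 : ℤ) + 1) + (v x.1 : ℤ)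

/-- The total order on addable/removable nodes: `(d,j) < (d',j')` iff `d < d'`, or
`d = d'` and `j > j'`. -/
def nodeLT {l : ℕ} (v : Fin l → ℕ) (lam : Fin l → ℕ → ℕ) (x y : Fin l × ℕ × Bool) : Prop :=
  nodeD v lam x < nodeD v lam y ∨ (nodeD v lam x = nodeD v lam y ∧ (y.1 : ℕ) < (x.1 : ℕ))

/-- `L` is the `r`-signature of `λ`: the increasing list of all addable and removable
`r`-nodes (flag `true` = removable, `false` = addable). -/
def IsSig (n : ℕ) {l : ℕ} (v : Fin l → ℕ) (lam : Fin l → ℕ → ℕ) (r : ZMod n)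
    (L : List (Fin l × ℕ × Bool)) : Prop :=
  L.Pairwise (nodeLT v lam) ∧
  ∀ x : Fin l × ℕ × Bool, x ∈ L ↔
    ((x.2.2 = true ∧ RemNode n v lam r x.1 x.2.1) ∨
      (x.2.2 = false ∧ AddNode n v lam r x.1 x.2.1))

/-- One step of the reduction procedure on signature words: delete an adjacent pair
consisting of a removable node (`true`) immediately followed by an addable node (`false`). -/
inductive SigStep : List Bool → List Bool → Prop
  | pair (l₁ l₂ : List Bool) : SigStep (l₁ ++ true :: false :: l₂) (l₁ ++ l₂)

/-! ### Reduction of signature words -/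

/-- The number of removable letters minus the number of addable letters of a word. -/
def bal : List Bool → ℤ
  | [] => 0
  | c :: w => bal w + (if c then 1 else -1)

/-- Every suffix of the word has `bal` at most `B`. For a word `false ^ a ++ true ^ b` this says
`b ≤ B`. -/
def Good (B : ℤ) : List Bool → Prop
  | [] => 0 ≤ B
  | c :: w => Good B w ∧ bal (c :: w) ≤ B

lemma Good.bal_le {B : ℤ} : ∀ {w : List Bool}, Good B w → bal w ≤ B
  | [], h => h
  | _ :: _, h => h.2

lemma bal_append_pair (l₁ l₂ : List Bool) :
    bal (l₁ ++ true :: false :: l₂) = bal (l₁ ++ l₂) := by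
  induction l₁ with
  | nil => simp [bal]
  | cons c l ih => simp [bal, ih]

lemma good_append_pair (B : ℤ) (l₁ l₂ : List Bool) :
    Good B (l₁ ++ true :: false :: l₂) ↔ Good B (l₁ ++ l₂) := by
  induction l₁ with
  | nil =>
    simp only [List.nil_append, Good, bal]
    constructor
    · exact fun h => h.1.1
    · intro h
      have := h.bal_le
      refine ⟨⟨h, ?_⟩, ?_⟩ <;> simp <;> linarith
  | cons c l ih =>
    have := bal_append_pair l l₂
    simp only [List.cons_append, Good, bal, ih, this]

lemma good_of_reduces {B : ℤ} {w w' : List Bool} (h : Relation.ReflTransGen SigStep w w') :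
    Good B w ↔ Good B w' := by
  induction h with
  | refl => rfl
  | tail _ hs ih =>
    obtain ⟨l₁, l₂⟩ := hs
    rw [ih, good_append_pair]

lemma bal_replicate_true (b : ℕ) : bal (List.replicate b true) = b := by
  induction b with
  | zero => rfl
  | succ b ih => simp [List.replicate_succ, bal, ih]

lemma good_replicate_true (B : ℤ) (b : ℕ) : Good B (List.replicate b true) ↔ (b : ℤ) ≤ B := by
  induction b with
  | zero => simp [Good]
  | succ b ih =>
    have := bal_replicate_true (b + 1)
    rw [List.replicate_succ] at this ⊢
    simp only [Good, ih, this]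
    push_cast
    constructor
    · exact fun h => h.2
    · exact fun h => ⟨by linarith, h⟩

lemma good_normal (B : ℤ) (a b : ℕ) :
    Good B (List.replicate a false ++ List.replicate b true) ↔ (b : ℤ) ≤ B := by
  induction a with
  | zero => simpa using good_replicate_true B b
  | succ a ih =>
    simp only [List.replicate_succ, List.cons_append, Good, ih, bal]
    constructor
    · exact fun h => h.1
    · intro h
      have := ((ih).2 h).bal_le
      refine ⟨h, ?_⟩
      simp
      linarith

lemma reduces_cons (c : Bool) {w w' : List Bool} (h : Relation.ReflTransGen SigStep w w') :
    Relation.ReflTransGen SigStep (c :: w) (c :: w') := by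
  induction h with
  | refl => exact .refl
  | tail _ hs ih =>
    obtain ⟨l₁, l₂⟩ := hs
    exact ih.tail (SigStep.pair (c :: l₁) l₂)

lemma exists_reduced (w : List Bool) : ∃ a b : ℕ,
    Relation.ReflTransGen SigStep w (List.replicate a false ++ List.replicate b true) := by
  induction w with
  | nil => exact ⟨0, 0, .refl⟩
  | cons c w ih =>
    obtain ⟨a, b, h⟩ := ih
    cases c with
    | false => exact ⟨a + 1, b, by simpa [List.replicate_succ] using reduces_cons false h⟩
    | true =>
      cases a with
      | zero => exact ⟨0, b + 1, by simpa [List.replicate_succ] using reduces_cons true h⟩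
      | succ a =>
        refine ⟨a, b, (reduces_cons true h).tail ?_⟩
        simpa [List.replicate_succ] using
          SigStep.pair [] (List.replicate a false ++ List.replicate b true)

/-! ### Words sorted by a weight -/

lemma bal_filter_le {α : Type*} (fl : α → Bool) (P Q : α → Bool) (L : List α)
    (h : ∀ x ∈ L, Q x = true → P x = true)
    (h' : ∀ x ∈ L, P x = true → Q x = false → fl x = false) :
    bal ((L.filter P).map fl) ≤ bal ((L.filter Q).map fl) := by
  induction L with
  | nil => simp
  | cons x L ih =>
    have ih := ih (fun y hy => h y (by simp [hy])) (fun y hy => h' y (by simp [hy]))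
    have hx := h x (by simp)
    have hx' := h' x (by simp)
    cases hP : P x <;> cases hQ : Q x <;> simp_all [bal]
    linarith

/-- If a list is weakly sorted by a weight `m`, with removable letters before addable ones among
equal weights, then the suffix condition need only be tested on the suffixes `m > k`. -/
lemma good_iff_filter {α : Type*} (fl : α → Bool) (m : α → ℕ) (B : ℤ) (hB : 0 ≤ B) (L : List α)
    (hL : L.Pairwise fun x y => m x ≤ m y ∧ (m x = m y → fl x = false → fl y = false))
    (h1 : ∀ x ∈ L, fl x = true → 1 ≤ m x) :
    Good B (L.map fl) ↔ ∀ k : ℕ, bal ((L.filter fun x => decide (k < m x)).map fl) ≤ B := by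
  induction L with
  | nil => simp [Good, bal, hB]
  | cons x L ih =>
    obtain ⟨hx, hL⟩ := List.pairwise_cons.1 hL
    have ih := ih hL (fun y hy => h1 y (by simp [hy]))
    have hall : ∀ k, k < m x → (L.filter fun y => decide (k < m y)) = L := by
      intro k hk
      rw [List.filter_eq_self]
      intro y hy
      simpa using lt_of_lt_of_le hk (hx y hy).1
    constructor
    · rintro ⟨hg, hb⟩ k
      by_cases hk : k < m x
      · simp only [List.filter_cons, hk, decide_true, if_true, hall k hk]
        exact hb
      · simpa [List.filter_cons, hk] using ih.1 hg k
    · intro h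
      have hg : Good B (L.map fl) := by
        rw [ih]
        intro k
        by_cases hk : k < m x
        · cases hf : fl x with
          | true =>
            have := h k
            simp [hk, hf, bal] at this
            linarith
          | false =>
            -- Discarding the letters of weight `m x`, all addable, only raises the balance.
            have := h (m x)
            simp only [List.filter_cons, lt_irrefl, decide_false, Bool.false_eq_true,
              if_false] at this
            refine le_trans (bal_filter_le fl _ _ L ?_ ?_) this
            · intro y hy hq
              simp at hq ⊢
              omega
            · intro y hy _ hq
              simp at hq
              exact (hx y hy).2 (le_antisymm (hx y hy).1 hq) hf
        · simpa [List.filter_cons, hk] using h k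
      refine ⟨hg, ?_⟩
      cases hf : fl x with
      | true =>
        have hm := h1 x (by simp) hf
        have := h (m x - 1)
        have hlt : m x - 1 < m x := by omega
        rw [List.filter_cons] at this
        simp only [hlt, decide_true, if_true, hall _ hlt, List.map_cons, hf] at this
        exact this
      | false =>
        have := hg.bal_le
        simp [bal]
        linarith

/-! ### The signature of a cylindrical multipartition -/

lemma IsPartitionF.antitone {f : ℕ → ℕ} (h : IsPartitionF f) : Antitone f :=
  antitone_nat_of_succ_le h.1

/-- The inequalities defining a cylindrical multipartition, composed along the components, possibly
once around the cylinder. -/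
lemma cyl_le {n l : ℕ} {v : Fin l → ℕ} (hv : SortedV n l v) {lam : Fin l → ℕ → ℕ}
    (hmp : IsMP l lam) (hc : Cylindrical n v lam) (j j' : Fin l) (i i' : ℕ)
    (h : (j' ≤ j ∧ i' + v j ≤ i + v j') ∨ i' + v j + n ≤ i + v j') :
    lam j i ≤ lam j' i' := by
  have A : ∀ (b a : ℕ) (hb : b < l) (hab : a ≤ b) (i i' : ℕ),
      i' + v ⟨b, hb⟩ ≤ i + v ⟨a, lt_of_le_of_lt hab hb⟩ →
      lam ⟨b, hb⟩ i ≤ lam ⟨a, lt_of_le_of_lt hab hb⟩ i' := by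
    intro b
    induction b with
    | zero =>
      intro a hb hab i i' h
      obtain rfl : a = 0 := by omega
      exact (hmp _).antitone (by omega)
    | succ b ih =>
      intro a hb hab i i' h
      rcases Nat.lt_or_ge b a with hlt | hge
      · obtain rfl : a = b + 1 := by omega
        exact (hmp _).antitone (by omega)
      · have hm : v ⟨b, by omega⟩ ≤ v ⟨b + 1, hb⟩ := hv.1 (by simp [Fin.le_def])
        have hm' : v ⟨a, by omega⟩ ≤ v ⟨b, by omega⟩ := hv.1 (by simpa [Fin.le_def] using hge)
        have h1 := hc.1 b hb (i - (v ⟨b + 1, hb⟩ - v ⟨b, by omega⟩))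
        rw [Nat.sub_add_cancel (by omega)] at h1
        exact h1.trans (ih a (by omega) hge _ _ (by omega))
  rcases h with ⟨hj, h⟩ | h
  · exact A j j' j.2 hj i i' h
  · have hl : 0 < l := by have := j.2; omega
    have hv0 : v ⟨0, hl⟩ ≤ v j := hv.1 (by simp [Fin.le_def])
    have hv1 : v j' ≤ v ⟨l - 1, by omega⟩ := hv.1 (by have := j'.2; simp [Fin.le_def]; omega)
    have hv2 := hv.2 ⟨l - 1, by omega⟩
    have h1 := A j 0 j.2 (Nat.zero_le _) i (i - (v j - v ⟨0, hl⟩)) (by simp only [Fin.eta]; omega)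
    have h2 := hc.2 hl (i - (v j - v ⟨0, hl⟩) - (n + v ⟨0, hl⟩ - v ⟨l - 1, by omega⟩))
    rw [Nat.sub_add_cancel (by omega)] at h2
    have h3 := A (l - 1) j' (by omega) (by have := j'.2; omega)
      (i - (v j - v ⟨0, hl⟩) - (n + v ⟨0, hl⟩ - v ⟨l - 1, by omega⟩)) i'
      (by simp only [Fin.eta]; omega)
    exact h1.trans (h2.trans h3)

/-- `x = (j, i, flag)` is an addable or removable `r`-node. -/
def IsNode (n : ℕ) {l : ℕ} (v : Fin l → ℕ) (lam : Fin l → ℕ → ℕ) (r : ZMod n)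
    (x : Fin l × ℕ × Bool) : Prop :=
  (x.2.2 = true ∧ RemNode n v lam r x.1 x.2.1) ∨ (x.2.2 = false ∧ AddNode n v lam r x.1 x.2.1)

lemma IsNode.cast_nodeD {n l : ℕ} {v : Fin l → ℕ} {lam : Fin l → ℕ → ℕ} {r : ZMod n}
    {x : Fin l × ℕ × Bool} (hx : IsNode n v lam r x) : ((nodeD v lam x : ℤ) : ZMod n) = r := by
  obtain ⟨j, i, f⟩ := x
  rcases hx with ⟨hf, -, -, h⟩ | ⟨hf, -, h⟩ <;> simp only at hf <;> subst hf <;>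
    rw [← h] <;> simp [nodeD, colour] <;> ring

/-- The signature order refines the order by row length, and among nodes at rows of equal length
it lists removable nodes first: on one diagonal of the unrolled cylinder the components are nested
regions, read from the smallest to the largest. -/
lemma node_sorted {n l : ℕ} (hn : 2 ≤ n) {v : Fin l → ℕ} (hv : SortedV n l v)
    {lam : Fin l → ℕ → ℕ} (hmp : IsMP l lam) (hc : Cylindrical n v lam) {r : ZMod n}
    {x y : Fin l × ℕ × Bool} (hx : IsNode n v lam r x) (hy : IsNode n v lam r y)
    (hxy : nodeLT v lam x y) :
    lam x.1 x.2.1 ≤ lam y.1 y.2.1 ∧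
      (lam x.1 x.2.1 = lam y.1 y.2.1 → x.2.2 = false → y.2.2 = false) := by
  have hdvd : (n : ℤ) ∣ nodeD v lam y - nodeD v lam x := by
    rw [← ZMod.intCast_zmod_eq_zero_iff_dvd]
    push_cast
    rw [hx.cast_nodeD, hy.cast_nodeD, sub_self]
  have hd : (nodeD v lam x = nodeD v lam y ∧ y.1 ≤ x.1) ∨ nodeD v lam x + n ≤ nodeD v lam y := by
    rcases hxy with h | ⟨h, h'⟩
    · right
      have := Int.le_of_dvd (by linarith) hdvd
      linarith
    · exact Or.inl ⟨h, h'.le⟩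
  obtain ⟨j, i, f⟩ := x
  obtain ⟨j', i', f'⟩ := y
  have key := cyl_le hv hmp hc j j'
  simp only [nodeD, Fin.le_def] at hd key ⊢
  constructor
  · by_contra! hlt
    have := key i i' (by cases f <;> cases f' <;> simp at hd <;> omega)
    omega
  · rintro he rfl
    by_contra hf'
    simp only [Bool.not_eq_false] at hf'
    subst hf'
    have h1 := key i (i' + 1) (by simp at hd; omega)
    rcases hy with ⟨-, -, h, -⟩ | ⟨h, -⟩
    · simp only at h
      omega
    · simp at h

lemma node_inj {n l : ℕ} {v : Fin l → ℕ}
    {lam : Fin l → ℕ → ℕ} (hmp : IsMP l lam) {r : ZMod n}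
    {x y : Fin l × ℕ × Bool} (hx : IsNode n v lam r x) (hy : IsNode n v lam r y)
    (hd : nodeD v lam x = nodeD v lam y) (hj : x.1 = y.1) : x = y := by
  obtain ⟨j, i, f⟩ := x
  obtain ⟨j', i', f'⟩ := y
  simp only at hj
  subst hj
  have ha := (hmp j).antitone
  have main : ∀ (i i' : ℕ) (f f' : Bool), IsNode n v lam r (j, i, f) →
      IsNode n v lam r (j, i', f') → nodeD v lam (j, i, f) = nodeD v lam (j, i', f') →
      ¬ i < i' := by
    intro i i' f f' _ hy hd hlt
    have := ha hlt.le
    simp only [nodeD] at hd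
    cases f <;> cases f' <;> simp at hd
    · omega
    · omega
    · obtain rfl : i' = i + 1 := by omega
      rcases hy with ⟨h, -⟩ | ⟨-, h, -⟩
      · simp at h
      · simp at h
        omega
    · omega
  have h1 := main i i' f f' hx hy hd
  have h2 := main i' i f' f hy hx hd.symm
  obtain rfl : i = i' := by omega
  cases f <;> cases f' <;> simp [nodeD] at hd ⊢

lemma finite_nodes (n : ℕ) {l : ℕ} (v : Fin l → ℕ) {lam : Fin l → ℕ → ℕ} (hmp : IsMP l lam)
    (r : ZMod n) : {x | IsNode n v lam r x}.Finite := by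
  choose N hN using fun j => (hmp j).2
  let M := ∑ j, N j
  have hM : ∀ j, N j ≤ M := fun j => Finset.single_le_sum (f := N) (fun _ _ => Nat.zero_le _)
    (Finset.mem_univ j)
  refine ((Finset.univ ×ˢ (Finset.range (M + 1) ×ˢ Finset.univ) :
    Finset (Fin l × ℕ × Bool)).finite_toSet).subset ?_
  rintro ⟨j, i, f⟩ hx
  simp only [Finset.coe_product, Set.mem_prod, Finset.mem_coe, Finset.mem_univ, Finset.mem_range,
    true_and, and_true]
  by_contra! hlt
  have h0 := hN j i (by have := hM j; omega)
  have h1 := hN j (i - 1) (by have := hM j; omega)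
  rcases hx with ⟨-, h, -⟩ | ⟨-, h, -⟩ <;> simp only at h <;> omega

lemma exists_sig (n : ℕ) {l : ℕ} (v : Fin l → ℕ) {lam : Fin l → ℕ → ℕ} (hmp : IsMP l lam)
    (r : ZMod n) : ∃ L, IsSig n v lam r L := by
  classical
  let key : Fin l × ℕ × Bool → ℤ ×ₗ ℤ := fun x => toLex (nodeD v lam x, -((x.1 : ℕ) : ℤ))
  let le : Fin l × ℕ × Bool → Fin l × ℕ × Bool → Prop := fun x y => key x ≤ key y
  have : Std.Total le := ⟨fun x y => le_total (key x) (key y)⟩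
  have : IsTrans _ le := ⟨fun x y z => le_trans (a := key x) (b := key y) (c := key z)⟩
  let S := (finite_nodes n v hmp r).toFinset
  have hmem : ∀ x, x ∈ S.toList.insertionSort le ↔ IsNode n v lam r x := by
    intro x
    rw [(List.perm_insertionSort le _).mem_iff]
    simp [S]
  refine ⟨S.toList.insertionSort le, ?_, fun x => hmem x⟩
  have hs := List.pairwise_insertionSort le S.toList
  have hnd : (S.toList.insertionSort le).Nodup :=
    (List.perm_insertionSort le _).nodup_iff.2 S.nodup_toList
  refine (hs.and hnd).imp_of_mem ?_
  rintro x y hx hy ⟨hle, hne⟩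
  rw [hmem] at hx hy
  rcases (Prod.Lex.le_iff).1 hle with h | ⟨h, h'⟩
  · exact Or.inl h
  · refine Or.inr ⟨h, ?_⟩
    have h' : -((x.1 : ℕ) : ℤ) ≤ -((y.1 : ℕ) : ℤ) := h'
    have : (x.1 : ℕ) ≠ (y.1 : ℕ) := fun he => hne (node_inj hmp hx hy h (Fin.ext he))
    omega

/-! ### The path in terms of nodes -/

lemma lt_colHt {f : ℕ → ℕ} (hf : IsPartitionF f) {m : ℕ} (hm : 1 ≤ m) (i : ℕ) :
    i < colHt f m ↔ m ≤ f i := by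
  classical
  have hex : ∃ N, f N < m := by
    obtain ⟨N, hN⟩ := hf.2
    exact ⟨N, by rw [hN N le_rfl]; omega⟩
  have hiff : ∀ i, i < Nat.find hex ↔ m ≤ f i := by
    intro i
    constructor
    · exact fun h => not_lt.1 (Nat.find_min hex h)
    · intro h
      by_contra! hlt
      have := hf.antitone hlt
      have := Nat.find_spec hex
      omega
  have : colHt f m = Nat.find hex := by
    unfold colHt
    simp_rw [← hiff]
    exact Nat.card_eq_of_equiv_fin Fin.equivSubtype.symm
  rw [this, hiff]

lemma eFun_eq (n : ℕ) {l : ℕ} (v : Fin l → ℕ) (lam : Fin l → ℕ → ℕ) (k : ℕ) (i : ZMod n) :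
    (eFun n v lam k i : ℤ) = ∑ j : Fin l,
      if (v j : ZMod n) + (k : ZMod n) - (colHt (lam j) (k + 1) : ZMod n) = i then 1 else 0 := by
  classical
  simp [eFun, Nat.card_eq_fintype_card, Fintype.card_subtype]

lemma sum_eFun (n : ℕ) [NeZero n] {l : ℕ} (v : Fin l → ℕ) (lam : Fin l → ℕ → ℕ) (k : ℕ) :
    ∑ i, eFun n v lam k i = l := by
  have : (∑ i, (eFun n v lam k i : ℤ)) = l := by
    simp_rw [eFun_eq]
    rw [Finset.sum_comm]
    simp
  exact_mod_cast this

lemma stepWt_inj (n : ℕ) [NeZero n] {e e' : ZMod n → ℕ} (hs : ∑ i, e i = ∑ i, e' i)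
    (h : stepWt n e = stepWt n e') : e = e' := by
  have h1 : ∀ j, (e (j + 1) : ℤ) - e' (j + 1) = e j - e' j := by
    intro j
    have := congrFun h (j + 1)
    simp only [stepWt, add_sub_cancel_right] at this
    linarith
  have h2 : ∀ k : ℕ, (e (k : ZMod n) : ℤ) - e' k = e 0 - e' 0 := by
    intro k
    induction k with
    | zero => simp
    | succ k ih => push_cast; rw [h1, ih]
  have h3 : ∀ j : ZMod n, (e j : ℤ) - e' j = e 0 - e' 0 := by
    intro j
    have := h2 j.val
    rwa [ZMod.natCast_zmod_val] at this
  have h4 : ∑ j : ZMod n, ((e j : ℤ) - e' j) = 0 := by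
    rw [Finset.sum_sub_distrib]
    have : (∑ i, (e i : ℤ)) = ∑ i, (e' i : ℤ) := by exact_mod_cast hs
    linarith
  simp_rw [h3] at h4
  have h5 : (e 0 : ℤ) - e' 0 = 0 := by
    rw [Finset.sum_const, Finset.card_univ, ZMod.card, nsmul_eq_mul] at h4
    exact (mul_eq_zero.1 h4).resolve_left (by exact_mod_cast NeZero.ne n)
  funext j
  have := h3 j
  omega

/-- In one component, the balance of the nodes at rows of length `m`. If there are such rows, the
bottom one ends in a removable node and the top one in an addable position; if there are none, the
two indicators on the right agree. -/
lemma comp_sum (n : ℕ) {l : ℕ} (v : Fin l → ℕ) {lam : Fin l → ℕ → ℕ} (hmp : IsMP l lam)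
    (r : ZMod n) (S : Finset (Fin l × ℕ × Bool)) (hS : ∀ x, x ∈ S ↔ IsNode n v lam r x)
    (j : Fin l) (k : ℕ) :
    (∑ x ∈ S with lam x.1 x.2.1 = k + 1 ∧ x.1 = j, (if x.2.2 then 1 else -1 : ℤ)) =
      (if (v j : ZMod n) + (k : ZMod n) - (colHt (lam j) (k + 1) : ZMod n) = r - 1
        then 1 else 0) -
      (if (v j : ZMod n) + ((k + 1 : ℕ) : ZMod n) - (colHt (lam j) (k + 1 + 1) : ZMod n) = r
        then 1 else 0) := by
  classical
  have H1 := lt_colHt (hmp j) (m := k + 1) (by omega)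
  have H2 := lt_colHt (hmp j) (m := k + 1 + 1) (by omega)
  have ha := (hmp j).antitone
  have hrow : ∀ i, lam j i = k + 1 ↔
      i < colHt (lam j) (k + 1) ∧ ¬ i < colHt (lam j) (k + 1 + 1) := by
    intro i
    rw [H1, H2]
    omega
  generalize colHt (lam j) (k + 1) = h at *
  generalize colHt (lam j) (k + 1 + 1) = h' at *
  by_cases hlt : h' < h
  · have hset : (S.filter fun x => lam x.1 x.2.1 = k + 1 ∧ x.1 = j) =
        ({(j, h - 1, true), (j, h', false)} : Finset _).filter (· ∈ S) := by
      ext ⟨j', i, f⟩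
      simp only [Finset.mem_filter, Finset.mem_insert, Finset.mem_singleton, Prod.mk.injEq]
      rw [and_comm]
      refine and_congr_left fun hx => ?_
      rw [hS] at hx
      constructor
      · rintro ⟨he, rfl⟩
        have hi := (hrow i).1 he
        rcases hx with ⟨hf, -, h2, -⟩ | ⟨hf, h2, -⟩ <;> simp only at hf h2
        · have := H1 (i + 1)
          left
          refine ⟨rfl, ?_, hf⟩
          omega
        · right
          refine ⟨rfl, ?_, hf⟩
          rcases h2 with rfl | h2
          · omega
          · have := H2 (i - 1)
            omega
      · rintro (⟨rfl, rfl, rfl⟩ | ⟨rfl, rfl, rfl⟩)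
        · exact ⟨(hrow _).2 (by omega), rfl⟩
        · exact ⟨(hrow _).2 (by omega), rfl⟩
    have e1 : lam j (h - 1) = k + 1 := (hrow _).2 (by omega)
    have e2 : lam j h' = k + 1 := (hrow _).2 (by omega)
    have m1 : (j, h - 1, true) ∈ S ↔ (v j : ZMod n) + (k : ZMod n) - (h : ZMod n) = r - 1 := by
      have := H1 (h - 1 + 1)
      have hlt' : lam j (h - 1 + 1) < k + 1 := by omega
      have hcast : ((h - 1 : ℕ) : ZMod n) = h - 1 := by
        rw [Nat.cast_sub (by omega)]
        simp
      rw [hS]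
      simp only [IsNode, RemNode, colour, e1, hlt', hcast]
      simp
      constructor <;> intro h <;> linear_combination h
    have m2 : (j, h', false) ∈ S ↔
        (v j : ZMod n) + ((k + 1 : ℕ) : ZMod n) - (h' : ZMod n) = r := by
      have hadd : h' = 0 ∨ lam j h' < lam j (h' - 1) := by
        have := H2 (h' - 1)
        omega
      rw [hS]
      rw [e2] at hadd
      simp only [IsNode, AddNode, colour, e2, hadd]
      simp
      constructor <;> intro h <;> linear_combination h
    rw [hset, Finset.sum_filter, Finset.sum_pair (by simp)]
    simp only [m1, m2]
    split_ifs <;> simp_all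
  · have hset : (S.filter fun x => lam x.1 x.2.1 = k + 1 ∧ x.1 = j) = ∅ := by
      rw [Finset.filter_eq_empty_iff]
      rintro ⟨j', i, f⟩ - ⟨he, rfl⟩
      have := (hrow i).1 he
      omega
    have hh : h = h' := by
      have a1 := H1 h
      have a2 := H2 h
      omega
    rw [hset, ← hh]
    have : ((v j : ZMod n) + (k : ZMod n) - (h : ZMod n) = r - 1) ↔
        ((v j : ZMod n) + ((k + 1 : ℕ) : ZMod n) - (h : ZMod n) = r) := by
      push_cast
      constructor <;> intro h <;> linear_combination h
    simp only [this]
    simp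

/-- The defect `e_k(r) - p_k(r)` is the balance of the `r`-nodes at rows longer than `k`. -/
lemma path_eq (n : ℕ) {l : ℕ} (v : Fin l → ℕ) {lam : Fin l → ℕ → ℕ} (hmp : IsMP l lam)
    (p : ℕ → ZMod n → ℤ) (hp : IsPi n v lam p)
    (r : ZMod n) (S : Finset (Fin l × ℕ × Bool)) (hS : ∀ x, x ∈ S ↔ IsNode n v lam r x) (k : ℕ) :
    (∑ x ∈ S with k < lam x.1 x.2.1, (if x.2.2 then 1 else -1 : ℤ)) =
      eFun n v lam k r - p k r := by
  classical
  obtain ⟨hstep, K, hK⟩ := hp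
  let g : ℕ → ℤ := fun k =>
    (∑ x ∈ S with k < lam x.1 x.2.1, (if x.2.2 then 1 else -1 : ℤ)) - (eFun n v lam k r - p k r)
  have hg : ∀ k, g k = g (k + 1) := by
    intro k
    have h1 := congrFun (hstep k) r
    simp only [stepWt] at h1
    have h2 : (∑ x ∈ S with k < lam x.1 x.2.1, (if x.2.2 then 1 else -1 : ℤ)) =
        (∑ x ∈ S with lam x.1 x.2.1 = k + 1, (if x.2.2 then 1 else -1 : ℤ)) +
        ∑ x ∈ S with k + 1 < lam x.1 x.2.1, (if x.2.2 then 1 else -1 : ℤ) := by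
      rw [Finset.sum_filter, Finset.sum_filter, Finset.sum_filter, ← Finset.sum_add_distrib]
      refine Finset.sum_congr rfl fun x _ => ?_
      rcases lt_trichotomy (lam x.1 x.2.1) (k + 1) with h | h | h
      · have e1 : ¬ k < lam x.1 x.2.1 := by omega
        have e2 : ¬ k + 1 < lam x.1 x.2.1 := by omega
        simp only [e1, e2, h.ne, if_false, add_zero]
      · simp [h]
      · have e1 : k < lam x.1 x.2.1 := by omega
        simp only [e1, h, h.ne', if_true, if_false, zero_add]
    have h3 : (∑ x ∈ S with lam x.1 x.2.1 = k + 1, (if x.2.2 then 1 else -1 : ℤ)) =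
        eFun n v lam k (r - 1) - eFun n v lam (k + 1) r := by
      rw [← Finset.sum_fiberwise _ (fun x : Fin l × ℕ × Bool => x.1), eFun_eq, eFun_eq,
        ← Finset.sum_sub_distrib]
      refine Finset.sum_congr rfl fun j _ => ?_
      rw [Finset.filter_filter]
      exact comp_sum n v hmp r S hS j k
    simp only [g]
    rw [h2, h3]
    linarith
  have hg' : ∀ N, g k = g (k + N) := by
    intro N
    induction N with
    | zero => rfl
    | succ N ih => rw [ih, hg, add_assoc]
  let M := K + ∑ j, lam j 0
  have hM : ∀ j i, lam j i ≤ M := fun j i =>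
    ((hmp j).antitone (Nat.zero_le i)).trans
      ((Finset.single_le_sum (f := fun j => lam j 0) (fun _ _ => Nat.zero_le _)
        (Finset.mem_univ j)).trans (Nat.le_add_left _ _))
  have h0 : g (k + M) = 0 := by
    have hset : (S.filter fun x => k + M < lam x.1 x.2.1) = ∅ := by
      rw [Finset.filter_eq_empty_iff]
      intro x _
      have := hM x.1 x.2.1
      omega
    have hc : ∀ j, colHt (lam j) (k + M + 1) = 0 := by
      intro j
      by_contra hne
      have := (lt_colHt (hmp j) (m := k + M + 1) (by omega) 0).1 (by omega)
      have := hM j 0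
      omega
    simp only [g]
    rw [hset, hK (k + M) (by simp only [M]; omega), eFun_eq]
    simp only [hc, gsp, wtOf, Finset.card_filter]
    simp [eq_sub_iff_add_eq]
  have := hg' M
  rw [h0] at this
  simp only [g] at this
  linarith

/-! ### Conclusion -/

lemma bal_eq_sum {α : Type*} (fl : α → Bool) (L : List α) :
    bal (L.map fl) = (L.map fun x => (if fl x then 1 else -1 : ℤ)).sum := by
  induction L with
  | nil => rfl
  | cons x L ih => simp [bal, ih, add_comm]

/-- The suffix condition on the `r`-signature is the restriction inequality at colour `r`. -/
lemma good_sig_iff (n : ℕ) (hn : 2 ≤ n) {l : ℕ} {v : Fin l → ℕ} (hv : SortedV n l v)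
    {lam : Fin l → ℕ → ℕ} (hmp : IsMP l lam) (hc : Cylindrical n v lam)
    {p : ℕ → ZMod n → ℤ} (hp : IsPi n v lam p) (r : ZMod n) (B : ℤ) (hB : 0 ≤ B)
    (L : List (Fin l × ℕ × Bool)) (hL : IsSig n v lam r L) :
    Good B (L.map fun x => x.2.2) ↔ ∀ k, (eFun n v lam k r : ℤ) ≤ p k r + B := by
  classical
  have hmem : ∀ x, x ∈ L ↔ IsNode n v lam r x := hL.2
  have hnd : L.Nodup := hL.1.imp fun {x y} h he => by
    subst he
    rcases h with h | ⟨-, h⟩ <;> exact lt_irrefl _ h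
  rw [good_iff_filter (fun x : Fin l × ℕ × Bool => x.2.2) (fun x => lam x.1 x.2.1) B hB L]
  · refine forall_congr' fun k => ?_
    have h1 : bal ((L.filter fun x => decide (k < lam x.1 x.2.1)).map fun x => x.2.2) =
        eFun n v lam k r - p k r := by
      rw [← path_eq n v hmp p hp r L.toFinset (by simpa using hmem), bal_eq_sum,
        ← List.sum_toFinset _ (hnd.filter _), List.toFinset_filter]
      simp
    rw [h1]
    constructor <;> intro h <;> linarith
  · exact hL.1.imp_of_mem fun {x y} hx hy h =>
      node_sorted hn hv hmp hc ((hmem x).1 hx) ((hmem y).1 hy) h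
  · intro x hx hf
    rcases (hmem x).1 hx with ⟨-, h, -⟩ | ⟨h, -⟩
    · exact h
    · simp [hf] at h

lemma isRes_iff (n : ℕ) [NeZero n] {l : ℕ} (L' : ZMod n → ℤ) {v : Fin l → ℕ}
    {lam : Fin l → ℕ → ℕ} {p : ℕ → ZMod n → ℤ} (hp : IsPi n v lam p) :
    IsRes n l L' (wtOf n v) (fun k i => p k i + L' i) ↔
      ∀ r k, (eFun n v lam k r : ℤ) ≤ p k r + L' r := by
  constructor
  · rintro ⟨-, h⟩ r k
    obtain ⟨e, hs, he, hle⟩ := h k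
    have : e = eFun n v lam k := by
      apply stepWt_inj n (hs.trans (sum_eFun n v lam k).symm)
      rw [← he, ← hp.1 k]
      funext i
      ring
    subst this
    exact hle r
  · intro h
    refine ⟨⟨fun k => ⟨eFun n v lam k, sum_eFun n v lam k, ?_⟩, ?_⟩, fun k =>
      ⟨eFun n v lam k, sum_eFun n v lam k, ?_, fun i => h i k⟩⟩
    · rw [← hp.1 k]
      funext i
      ring
    · simpa using hp.2
    · rw [← hp.1 k]
      funext i
      ring

lemma isRes_iff_normal (n : ℕ) [NeZero n] (hn : 2 ≤ n) {l : ℕ} (L' : ZMod n → ℤ)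
    (hd' : Dominant n L') {v : Fin l → ℕ} (hv : SortedV n l v)
    (lam : Fin l → ℕ → ℕ) (p : ℕ → ZMod n → ℤ) (h : IsHL n v lam p) :
    IsRes n l L' (wtOf n v) (fun k i => p k i + L' i) ↔
      ∀ (r : ZMod n) (L : List (Fin l × ℕ × Bool)) (w : List Bool) (a b : ℕ),
        IsSig n v lam r L →
        Relation.ReflTransGen SigStep (L.map fun x => x.2.2) w →
        w = List.replicate a false ++ List.replicate b true →
        (b : ℤ) ≤ L' r := by
  obtain ⟨hmp, hc, hp, -⟩ := h
  have key := good_sig_iff n hn hv hmp hc hp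
  rw [isRes_iff n L' hp]
  constructor
  · rintro H r L w a b hL hw rfl
    rw [← good_normal (L' r) a b, ← good_of_reduces hw, key r _ (hd' r) L hL]
    exact H r
  · intro H r
    obtain ⟨L, hL⟩ := exists_sig n v hmp r
    obtain ⟨a, b, hw⟩ := exists_reduced (L.map fun x => x.2.2)
    rw [← key r _ (hd' r) L hL, good_of_reduces hw, good_normal]
    exact H r L _ a b hL hw rfl

/-- `p + Λ′ ∈ 𝒫(Λ′,Λ″)` iff for every `r` the number of normal removable
`r`-nodes of `λ(p)` is at most `Λ′(r)`; consequently `𝒴(Λ′,Λ″)` consists of the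
`λ ∈ 𝒴(Λ″)` with all these counts at most `Λ′(r)`. -/
theorem restricted_iff_normal_bound (n : ℕ) [NeZero n] (hn : 2 ≤ n) (l' l'' : ℕ)
    (L' : ZMod n → ℤ) (hd' : Dominant n L') (hl' : (∑ i, L' i) = (l' : ℤ))
    (v'' : Fin l'' → ℕ) (hv'' : SortedV n l'' v'') :
    (∀ (lam : Fin l'' → ℕ → ℕ) (p : ℕ → ZMod n → ℤ), IsHL n v'' lam p →
      (IsRes n l'' L' (wtOf n v'') (fun k i => p k i + L' i) ↔
        ∀ (r : ZMod n) (L : List (Fin l'' × ℕ × Bool)) (w : List Bool) (a b : ℕ),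
          IsSig n v'' lam r L →
          Relation.ReflTransGen SigStep (L.map fun x => x.2.2) w →
          w = List.replicate a false ++ List.replicate b true →
          (b : ℤ) ≤ L' r)) ∧
    (∀ lam : Fin l'' → ℕ → ℕ,
      (∃ q : ℕ → ZMod n → ℤ, IsRes n l'' L' (wtOf n v'') q ∧
          IsHL n v'' lam (fun k i => q k i - L' i)) ↔
        (InY n v'' lam ∧
          ∀ (r : ZMod n) (L : List (Fin l'' × ℕ × Bool)) (w : List Bool) (a b : ℕ),
            IsSig n v'' lam r L →
            Relation.ReflTransGen SigStep (L.map fun x => x.2.2) w →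
            w = List.replicate a false ++ List.replicate b true →
            (b : ℤ) ≤ L' r)) := by
  have main := isRes_iff_normal n hn L' hd' hv''
  refine ⟨main, fun lam => ⟨?_, ?_⟩⟩
  · rintro ⟨q, hq, hl⟩
    refine ⟨⟨_, hl⟩, (main lam _ hl).1 ?_⟩
    simpa using hq
  · rintro ⟨⟨p, hl⟩, h⟩
    exact ⟨fun k i => p k i + L' i, (main lam p hl).2 h, by simpa using hl⟩

end BF
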